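/- Let 𝒲 = ℝ^d, let the loss take values in [0,1], and let W : permutations → ℝ^d be a measurable map (the parameter returned by a deterministic transductive learning algorithm). Fix σ > 0 and suppose (i) either (m ≥ 2 and u ≥ 3) or (m ≥ 3 and u ≥ 2), and (ii) for every permutation z, R_test(W(z), z) ≤ E_{ε∼N(0,σ²I_d)}[ R_test(W(z)+ε, z) ], where N(0,σ²I_d) is the law of a vector of d i.i.d. centered Gaussians of variance σ². Set C̃_{m,u} := sqrt( 2·log(m·u/(m+u)) / d ) and ρ := σ·(1 + C̃_{m,u})·sqrt(d). Then for every λ > 0 and 0 < δ < 1, with probability at least 1 − δ over the uniform random permutation Z: R_test(W(Z), Z) ≤ max_{‖ε‖₂ ≤ ρ} R_train(W(Z)+ε, Z) + (λ·C_{m,u} + 8)·(m+u)/(8·m·u) + (1/λ)·( (1/2)·[ 1 + d·log( 1 + (1 + C̃_{m,u})²·‖W(Z)‖₂² / ρ² ) ] + log(1/(6δ)) + 2·log( 6π·m·u/(m+u) ) ). -/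

import Mathlib

/-!
The bound is a PAC-Bayes bound for the Gaussian posterior `N(W(z), σ² I)`, with the prior variance
chosen from a finite grid by a weighted union bound. Write `k = m u / (m + u)`.

*Concentration.* For a fixed parameter, the train-test gap has a sub-Gaussian exponential moment under
a uniform permutation (`gap_mgf`). This follows from Hoeffding's lemma applied to each draw without
replacement; the variance terms telescope through `1 / n² ≤ 1 / (n - 1/2) - 1 / (n + 1/2)`
(`perm_mgf`), and drawing the smaller of the two blocks produces the constant `C_{m,u}`.

*Change of measure.* The mean of the gap under `N(W(z), σ² I)` is bounded by its log-Laplace transform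
under a prior `N(0, τ² I)` plus the relative entropy of the two Gaussians (`gibbs_gauss`). The priors
are `τ_j² = σ² exp (j / d)` with weights `6 / (π² (j + 1)²)`. Markov's inequality for the weighted
sum of the Laplace transforms controls all of them simultaneously with probability at least `1 - δ`
(`uniformPerm_ge`). With `L = d log (1 + ‖W(z)‖² / (d σ²))` and `j = ⌈L⌉`, the relative entropy is at
most `(1 + L) / 2` (`kl_grid`), and the price of the weight is `log (((j + 1) π)² / 6)`, at most
`log ((6 k π)² / 6)` if `L ≤ 4 k`. If `L > 4 k`, the right-hand side is at least
`lam / (8 k) + 2 k / lam ≥ 1` and there is nothing to prove.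

*Smoothing.* The hypothesis on the test risk bounds it by its Gaussian average, and the Gaussian
average of the training risk is at most its supremum over the ball of radius `ρ` plus the probability
of leaving that ball, which is at most `1 / k` (`gauss_tail`, `integral_Rtrain_le`).
-/

open MeasureTheory ProbabilityTheory Real

noncomputable section

/-- The constant `C_{m,u} = 2(m+u)·max(m,u)/((m+u−1/2)·(2·max(m,u)−1))`. -/
def Cmu (m u : ℕ) : ℝ :=
  2 * ((m : ℝ) + u) * max (m : ℝ) u / ((((m : ℝ) + u) - 1/2) * (2 * max (m : ℝ) u - 1))

/-- Transductive training error: average loss over the first `m` indices of the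
sampling sequence `z`. -/
def Rtrain {S W : Type*} (m u : ℕ) (s : Fin (m + u) → S) (ℓ : W → S → ℝ)
    (w : W) (z : Fin (m + u) → Fin (m + u)) : ℝ :=
  (∑ i : Fin (m + u), if (i : ℕ) < m then ℓ w (s (z i)) else 0) / m

/-- Transductive test error: average loss over the last `u` indices of the
sampling sequence `z`. -/
def Rtest {S W : Type*} (m u : ℕ) (s : Fin (m + u) → S) (ℓ : W → S → ℝ)
    (w : W) (z : Fin (m + u) → Fin (m + u)) : ℝ :=
  (∑ i : Fin (m + u), if m ≤ (i : ℕ) then ℓ w (s (z i)) else 0) / u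

instance (n : ℕ) : MeasurableSpace (Equiv.Perm (Fin n)) := ⊤

/-- The uniform distribution on the symmetric group of `Fin n` (sampling without
replacement). -/
def uniformPerm (n : ℕ) : Measure (Equiv.Perm (Fin n)) :=
  letI : Nonempty (Equiv.Perm (Fin n)) := ⟨1⟩
  (PMF.uniformOfFintype (Equiv.Perm (Fin n))).toMeasure

/-- Kullback–Leibler divergence `D_KL(μ ‖ ν) = ∫ log(dμ/dν) dμ`. -/
def klDivR {α : Type*} [MeasurableSpace α] (μ ν : Measure α) : ℝ :=
  ∫ x, llr μ ν x ∂μ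

/-- Mutual information `I(X;Y) = D_KL(P_{X,Y} ‖ P_X ⊗ P_Y)`. -/
def mutInfo {Ω α β : Type*} [MeasurableSpace Ω] [MeasurableSpace α] [MeasurableSpace β]
    (μ : Measure Ω) (X : Ω → α) (Y : Ω → β) : ℝ :=
  klDivR (Measure.map (fun ω => (X ω, Y ω)) μ) ((Measure.map X μ).prod (Measure.map Y μ))

/-- Euclidean (ℓ²) norm on `ℝ^d`. -/
def l2norm (d : ℕ) (w : Fin d → ℝ) : ℝ := Real.sqrt (∑ i, w i ^ 2)

/-- The Gaussian measure `N(0, σ²·I_d)` on `ℝ^d`: product of `d` i.i.d. centered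
Gaussians of variance `σ²`. -/
def gaussVec (d : ℕ) (σ : ℝ) : Measure (Fin d → ℝ) :=
  Measure.pi fun _ : Fin d => gaussianReal 0 ⟨σ ^ 2, sq_nonneg σ⟩

/-- `C̃_{m,u} = sqrt(2·log(m·u/(m+u))/d)`. -/
def Ctil (d m u : ℕ) : ℝ :=
  Real.sqrt (2 * Real.log ((m : ℝ) * u / ((m : ℝ) + u)) / d)

/-- `ρ = σ·(1 + C̃_{m,u})·sqrt d`. -/
def rho (d m u : ℕ) (σ : ℝ) : ℝ := σ * (1 + Ctil d m u) * Real.sqrt d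

/-! ### Sampling without replacement -/

/-- Hoeffding's lemma for a uniformly chosen entry of a finite list of numbers in `[0, 1]`. -/
lemma hoeffding_uniform (n : ℕ) (x : Fin (n + 1) → ℝ) (hx : ∀ i, 0 ≤ x i ∧ x i ≤ 1) (t : ℝ) :
    ∑ p, rexp (t * (x p - (∑ i, x i) / (n + 1))) ≤ (n + 1) * rexp (t ^ 2 / 8) := by
  have h := (hasSubgaussianMGF_of_mem_Icc
    (μ := (PMF.uniformOfFintype (Fin (n + 1))).toMeasure) (X := x) (a := 0) (b := 1)
    (measurable_of_finite _).aemeasurable (Filter.Eventually.of_forall hx)).mgf_le t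
  have hn : (0 : ℝ) < n + 1 := by positivity
  simp only [mgf, PMF.integral_eq_sum, PMF.uniformOfFintype_apply, Fintype.card_fin, smul_eq_mul,
    ← Finset.mul_sum] at h
  norm_num [ENNReal.toReal_inv] at h
  rw [show ((n : ENNReal) + 1).toReal = (n : ℝ) + 1 by exact_mod_cast ENNReal.toReal_natCast (n + 1)] at h
  rw [show (t ^ 2 / 8 : ℝ) = 1 / 4 * t ^ 2 / 2 by ring]
  rw [inv_mul_le_iff₀ hn] at h
  simpa [div_eq_inv_mul] using h

/-- Sub-Gaussian bound for the sum of the first `m` entries of a uniformly shuffled list. The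
induction removes the first drawn entry `p`: it shifts the centred sum by `u / n` times its own
deviation, where `n` is the number of remaining entries, so `hoeffding_uniform` contributes
`(t u / n)² / 8` at each step. -/
lemma perm_mgf (u : ℕ) (hu : 1 ≤ u) (t : ℝ) : ∀ (m N : ℕ), N = m + u →
    ∀ x : Fin N → ℝ, (∀ i, 0 ≤ x i ∧ x i ≤ 1) →
    ∑ z : Equiv.Perm (Fin N),
        rexp (t * ((∑ i : Fin N, if (i : ℕ) < m then x (z i) else 0) - m * (∑ i, x i) / N))
      ≤ N.factorial * rexp (t ^ 2 / 8 * ((u : ℝ) ^ 2 * m / ((u - 1 / 2) * (N - 1 / 2)))) := by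
  intro m
  induction m with
  | zero =>
    intro N hN x hx
    simp [Fintype.card_perm]
  | succ m ih =>
    intro N hN x hx
    obtain ⟨n, rfl⟩ : ∃ n, N = n + 1 := ⟨m + u, by omega⟩
    have hn : n = m + u := by omega
    have hn0 : (0 : ℝ) < n := by exact_mod_cast (by omega : 0 < n)
    have hnR : (n : ℝ) = m + u := by exact_mod_cast hn
    have hu1 : (1 : ℝ) ≤ u := by exact_mod_cast hu
    have hm0 : (0 : ℝ) ≤ m := by positivity
    rw [← Equiv.Perm.decomposeFin.symm.sum_comp, Fintype.sum_prod_type]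
    set X := ∑ i, x i with hX
    have key : ∀ p : Fin (n + 1), ∀ e : Equiv.Perm (Fin n),
        t * ((∑ i : Fin (n + 1), if (i : ℕ) < m + 1 then
            x (Equiv.Perm.decomposeFin.symm (p, e) i) else 0) - (m + 1 : ℕ) * X / (n + 1 : ℕ))
        = t * u / n * (x p - X / (n + 1)) +
          t * ((∑ i : Fin n, if (i : ℕ) < m then
            (fun j : Fin n => x (Equiv.swap 0 p j.succ)) (e i) else 0)
              - m * (∑ j : Fin n, x (Equiv.swap 0 p j.succ)) / n) := by
      intro p e
      have hs : ∑ j : Fin n, x (Equiv.swap 0 p j.succ) = X - x p := by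
        have := Equiv.sum_comp (Equiv.swap 0 p) x
        rw [Fin.sum_univ_succ, Equiv.swap_apply_left] at this
        linarith
      rw [hs, Fin.sum_univ_succ]
      simp only [Equiv.Perm.decomposeFin_symm_apply_zero, Equiv.Perm.decomposeFin_symm_apply_succ,
        Fin.val_succ, Fin.val_zero, Nat.zero_lt_succ, if_true, add_lt_add_iff_right]
      have : (u : ℝ) = n - m := by linarith
      rw [this]
      push_cast
      field_simp
      ring
    -- The first factor depends only on `p`, the second is the induction hypothesis for the
    -- list with `p` deleted.
    simp_rw [key, Real.exp_add, ← Finset.mul_sum]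
    have hstep : ∀ p : Fin (n + 1), _ := fun p => ih n hn
      (fun j : Fin n => x (Equiv.swap 0 p j.succ)) (fun j => hx _)
    calc _ ≤ ∑ p : Fin (n + 1), rexp (t * u / n * (x p - X / (n + 1))) *
          (n.factorial * rexp (t ^ 2 / 8 * ((u : ℝ) ^ 2 * m / ((u - 1 / 2) * (n - 1 / 2))))) := by
          refine Finset.sum_le_sum fun p _ => ?_
          exact mul_le_mul_of_nonneg_left (hstep p) (Real.exp_pos _).le
      _ ≤ ((n + 1) * rexp ((t * u / n) ^ 2 / 8)) *
          (n.factorial * rexp (t ^ 2 / 8 * ((u : ℝ) ^ 2 * m / ((u - 1 / 2) * (n - 1 / 2))))) := by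
          rw [← Finset.sum_mul]
          exact mul_le_mul_of_nonneg_right (hoeffding_uniform n x hx _) (by positivity)
      _ = (n + 1).factorial * rexp ((t * u / n) ^ 2 / 8 +
            t ^ 2 / 8 * ((u : ℝ) ^ 2 * m / ((u - 1 / 2) * (n - 1 / 2)))) := by
          rw [Real.exp_add, Nat.factorial_succ]; push_cast; ring
      _ ≤ _ := by
          gcongr
          -- the telescoping bound `1 / n ^ 2 ≤ 1 / (n - 1/2) - 1 / (n + 1/2)`
          have h1 : 1 / (n : ℝ) ^ 2 ≤ 1 / (n - 1 / 2) - 1 / (n + 1 / 2) := by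
            have : (1 : ℝ) ≤ n := by linarith
            rw [div_sub_div _ _ (by linarith) (by linarith), div_le_div_iff₀ (by positivity)
              (by nlinarith)]
            nlinarith
          have h2 : (u : ℝ) ^ 2 * m / ((u - 1 / 2) * (n - 1 / 2))
              = u ^ 2 * (1 / (u - 1 / 2) - 1 / (n - 1 / 2)) := by
            have a1 : (u : ℝ) - 1 / 2 ≠ 0 := by linarith
            have a2 : (n : ℝ) - 1 / 2 ≠ 0 := by linarith
            rw [div_sub_div _ _ a1 a2, ← mul_div_assoc]
            congr 1; rw [hnR]; ring
          have h3 : (u : ℝ) ^ 2 * (m + 1 : ℕ) / ((u - 1 / 2) * ((n + 1 : ℕ) - 1 / 2))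
              = u ^ 2 * (1 / (u - 1 / 2) - 1 / (n + 1 / 2)) := by
            have a1 : (u : ℝ) - 1 / 2 ≠ 0 := by linarith
            have a2 : (n : ℝ) + 1 / 2 ≠ 0 := by linarith
            rw [div_sub_div _ _ a1 a2, ← mul_div_assoc, hnR]
            push_cast
            congr 1
            · ring
            · rw [hnR]; ring
          rw [h2, h3]
          have h4 : (t * u / n) ^ 2 / 8 = t ^ 2 / 8 * (u ^ 2 * (1 / (n : ℝ) ^ 2)) := by
            field_simp
          rw [h4, ← mul_add, ← mul_add]
          gcongr
          linarith

/-! ### Change of measure between Gaussian vectors -/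

lemma gaussVec_eq (d : ℕ) (σ : ℝ) :
    gaussVec d σ = Measure.pi fun _ : Fin d => gaussianReal 0 (σ ^ 2).toNNReal := by
  rw [Real.toNNReal_of_nonneg (sq_nonneg σ)]
  rfl

lemma pi_withDensity {d : ℕ} (μ ν : Fin d → Measure ℝ) [∀ i, IsProbabilityMeasure (μ i)]
    [∀ i, IsProbabilityMeasure (ν i)] (f : Fin d → ℝ → ENNReal) (hf : ∀ i, Measurable (f i))
    (h : ∀ i, ν i = (μ i).withDensity (f i)) :
    Measure.pi ν = (Measure.pi μ).withDensity (fun x => ∏ i, f i (x i)) := by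
  refine Measure.pi_eq fun s hs => ?_
  rw [withDensity_apply _ (MeasurableSet.univ_pi hs), ← lintegral_indicator
    (MeasurableSet.univ_pi hs)]
  have h1 : ∀ x : Fin d → ℝ, (Set.univ.pi s).indicator (fun x => ∏ i, f i (x i)) x
      = ∏ i, (s i).indicator (f i) (x i) := by
    intro x
    by_cases hx : x ∈ Set.univ.pi s
    · rw [Set.indicator_of_mem hx]
      exact Finset.prod_congr rfl fun i _ => (Set.indicator_of_mem (hx i trivial) _).symm
    · rw [Set.indicator_of_notMem hx]
      simp only [Set.mem_pi, Set.mem_univ, true_imp_iff, not_forall] at hx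
      obtain ⟨i, hi⟩ := hx
      exact (Finset.prod_eq_zero (Finset.mem_univ i) (Set.indicator_of_notMem hi _)).symm
  simp_rw [h1]
  have hm : ∀ i, Measurable ((s i).indicator (f i)) := fun i => (hf i).indicator (hs i)
  rw [lintegral_prod_eq_prod_lintegral_of_indepFun Finset.univ
    (fun i (x : Fin d → ℝ) => (s i).indicator (f i) (x i))
    (iIndepFun_pi (μ := μ) (X := fun i => (s i).indicator (f i)) fun i => (hm i).aemeasurable)
    (fun i => (hm i).comp (measurable_pi_apply i))]
  refine Finset.prod_congr rfl fun i _ => ?_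
  rw [h i, withDensity_apply _ (hs i), ← lintegral_indicator (hs i)]
  exact (measurePreserving_eval μ i).lintegral_comp (hm i)

/-- Logarithm of the density of `N(-w, τ² I)` with respect to `N(0, σ² I)` on `ℝ^d`. -/
def logDens (d : ℕ) (σ τ : ℝ) (w x : Fin d → ℝ) : ℝ :=
  d * Real.log (σ / τ) + ∑ i, (x i ^ 2 / (2 * σ ^ 2) - (x i + w i) ^ 2 / (2 * τ ^ 2))

lemma measurable_logDens (d : ℕ) (σ τ : ℝ) (w : Fin d → ℝ) : Measurable (logDens d σ τ w) := by
  unfold logDens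
  fun_prop

lemma gaussianReal_density (σ τ a : ℝ) (hσ : 0 < σ) (hτ : 0 < τ) :
    gaussianReal (-a) (τ ^ 2).toNNReal = (gaussianReal 0 (σ ^ 2).toNNReal).withDensity
      (fun x => ENNReal.ofReal (rexp (Real.log (σ / τ) +
        (x ^ 2 / (2 * σ ^ 2) - (x + a) ^ 2 / (2 * τ ^ 2))))) := by
  have h1 : (σ ^ 2).toNNReal ≠ 0 := (Real.toNNReal_pos.2 (by positivity)).ne'
  have h2 : (τ ^ 2).toNNReal ≠ 0 := (Real.toNNReal_pos.2 (by positivity)).ne'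
  rw [gaussianReal_of_var_ne_zero _ h1, gaussianReal_of_var_ne_zero _ h2,
    ← withDensity_mul _ (measurable_gaussianPDF _ _) (by fun_prop)]
  congr 1
  ext x
  simp only [gaussianPDF, Pi.mul_apply, gaussianPDFReal]
  rw [← ENNReal.ofReal_mul (by positivity)]
  congr 1
  simp only [Real.coe_toNNReal _ (sq_nonneg _)]
  have e1 : √(2 * π * τ ^ 2) = √(2 * π) * τ := by
    rw [Real.sqrt_mul (by positivity), Real.sqrt_sq hτ.le]
  have e2 : √(2 * π * σ ^ 2) = √(2 * π) * σ := by
    rw [Real.sqrt_mul (by positivity), Real.sqrt_sq hσ.le]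
  rw [e1, e2, Real.exp_add, Real.exp_log (by positivity)]
  have e3 : rexp (x ^ 2 / (2 * σ ^ 2) - (x + a) ^ 2 / (2 * τ ^ 2))
      = rexp (-(x - -a) ^ 2 / (2 * τ ^ 2)) / rexp (-(x - 0) ^ 2 / (2 * σ ^ 2)) := by
    rw [← Real.exp_sub]; congr 1; ring
  rw [e3]
  have := Real.exp_pos (-(x - 0) ^ 2 / (2 * σ ^ 2))
  field_simp

lemma gaussVec_density (d : ℕ) (σ τ : ℝ) (hσ : 0 < σ) (hτ : 0 < τ) (w : Fin d → ℝ) :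
    Measure.pi (fun i => gaussianReal (-w i) (τ ^ 2).toNNReal)
      = (gaussVec d σ).withDensity (fun x => ENNReal.ofReal (rexp (logDens d σ τ w x))) := by
  rw [gaussVec_eq, pi_withDensity _ _ _ (fun i => by fun_prop)
    fun i => gaussianReal_density σ τ (w i) hσ hτ]
  congr 1
  ext x
  rw [← ENNReal.ofReal_prod_of_nonneg (fun i _ => (Real.exp_pos _).le), ← Real.exp_sum,
    Finset.sum_add_distrib]
  simp [logDens]

instance (d : ℕ) (σ : ℝ) : IsProbabilityMeasure (gaussVec d σ) := by
  rw [gaussVec_eq]; infer_instance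

lemma gaussVec_map_sub (d : ℕ) (τ : ℝ) (w : Fin d → ℝ) :
    (Measure.pi (fun i => gaussianReal (-w i) (τ ^ 2).toNNReal)).map (fun x => w + x)
      = gaussVec d τ := by
  have : (fun x : Fin d → ℝ => w + x) = fun x i => (fun y => w i + y) (x i) := rfl
  rw [this, Measure.pi_map_pi (fun i => by fun_prop)]
  simp_rw [gaussianReal_map_const_add]
  simp [gaussVec_eq]

lemma integral_sq_gauss (σ a : ℝ) :
    Integrable (fun x : ℝ => (x + a) ^ 2) (gaussianReal 0 (σ ^ 2).toNNReal) ∧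
    ∫ x, (x + a) ^ 2 ∂(gaussianReal 0 (σ ^ 2).toNNReal) = σ ^ 2 + a ^ 2 := by
  set g := gaussianReal 0 (σ ^ 2).toNNReal
  have h2 : MemLp (fun x : ℝ => x) 2 g := memLp_id_gaussianReal 2
  have i1 : Integrable (fun x : ℝ => x) g := h2.integrable (by norm_num)
  have i2 : Integrable (fun x : ℝ => x ^ 2) g := h2.integrable_sq
  have e1 : ∫ x, x ∂g = 0 := integral_id_gaussianReal
  have e2 : ∫ x, x ^ 2 ∂g = σ ^ 2 := by
    have := variance_fun_id_gaussianReal (μ := 0) (v := (σ ^ 2).toNNReal)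
    rw [variance_eq_integral (by fun_prop)] at this
    simpa [g, integral_id_gaussianReal, Real.coe_toNNReal _ (sq_nonneg σ)] using this
  have hx : (fun x : ℝ => (x + a) ^ 2) = fun x => x ^ 2 + (2 * a * x + a ^ 2) := by
    ext x; ring
  have i3 : Integrable (fun x => 2 * a * x + a ^ 2) g :=
    (i1.const_mul _).add (integrable_const _)
  refine ⟨hx ▸ i2.add i3, ?_⟩
  rw [hx, integral_add i2 i3, integral_add (i1.const_mul _) (integrable_const _),
    integral_const_mul, e1, e2]
  simp

lemma integral_logDens (d : ℕ) (σ τ : ℝ) (hσ : 0 < σ) (w : Fin d → ℝ) :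
    Integrable (logDens d σ τ w) (gaussVec d σ) ∧
    ∫ x, logDens d σ τ w x ∂(gaussVec d σ) =
      d * Real.log (σ / τ) + d / 2 - (d * σ ^ 2 + ∑ i, w i ^ 2) / (2 * τ ^ 2) := by
  have key : ∀ i : Fin d, ∀ a : ℝ,
      Integrable (fun x : Fin d → ℝ => (x i + a) ^ 2) (gaussVec d σ) ∧
      ∫ x, (x i + a) ^ 2 ∂(gaussVec d σ) = σ ^ 2 + a ^ 2 := by
    intro i a
    have mp := measurePreserving_eval
      (fun _ : Fin d => gaussianReal 0 (σ ^ 2).toNNReal) i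
    rw [← gaussVec_eq] at mp
    obtain ⟨h1, h2⟩ := integral_sq_gauss σ a
    refine ⟨mp.integrable_comp_of_integrable h1, ?_⟩
    rw [← h2, ← mp.map_eq, integral_map mp.measurable.aemeasurable (by fun_prop)]
  have hi : ∀ i ∈ (Finset.univ : Finset (Fin d)), Integrable (fun x : Fin d → ℝ =>
      (x i ^ 2 / (2 * σ ^ 2) - (x i + w i) ^ 2 / (2 * τ ^ 2))) (gaussVec d σ) := by
    intro i _
    exact Integrable.sub (by simpa using (key i 0).1.div_const (2 * σ ^ 2))
      ((key i (w i)).1.div_const _)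
  refine ⟨(integrable_const _).add (integrable_finsetSum _ hi), ?_⟩
  unfold logDens
  rw [integral_add (integrable_const _) (integrable_finsetSum _ hi), integral_finsetSum _ hi]
  have : ∀ i : Fin d, ∫ x : Fin d → ℝ, (x i ^ 2 / (2 * σ ^ 2) - (x i + w i) ^ 2 / (2 * τ ^ 2))
      ∂(gaussVec d σ) = 1 / 2 - (σ ^ 2 + w i ^ 2) / (2 * τ ^ 2) := by
    intro i
    have h0 := key i 0
    simp only [add_zero] at h0
    rw [integral_sub (h0.1.div_const _) ((key i (w i)).1.div_const _), integral_div,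
      integral_div, h0.2, (key i (w i)).2]
    rw [zero_pow two_ne_zero, add_zero]
    congr 1
    field_simp
  simp_rw [this, Finset.sum_sub_distrib, ← Finset.sum_div, Finset.sum_add_distrib]
  simp
  ring

/-- Gibbs variational inequality: the mean of `f` under `N(w, σ² I)` is at most the log-Laplace
transform of `f` under `N(0, τ² I)` plus the relative entropy of the first Gaussian with respect to
the second, written out explicitly. It is Jensen's inequality for `exp` after inserting the density
`logDens`. -/
lemma gibbs_gauss (d : ℕ) (σ τ : ℝ) (hσ : 0 < σ) (hτ : 0 < τ) (w : Fin d → ℝ)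
    (f : (Fin d → ℝ) → ℝ) (hf : Measurable f) (B : ℝ) (hB : ∀ v, |f v| ≤ B) :
    ∫ ε, f (w + ε) ∂(gaussVec d σ) ≤ Real.log (∫ v, rexp (f v) ∂(gaussVec d τ))
      + (d * Real.log (τ / σ) - d / 2 + (d * σ ^ 2 + ∑ i, w i ^ 2) / (2 * τ ^ 2)) := by
  obtain ⟨hi, he⟩ := integral_logDens d σ τ hσ w
  have hmeas := measurable_logDens d σ τ w
  have hfw : Measurable fun ε => f (w + ε) := by fun_prop
  have hif : Integrable (fun ε => f (w + ε)) (gaussVec d σ) :=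
    Integrable.of_bound hfw.aestronglyMeasurable B (Filter.Eventually.of_forall fun ε => hB _)
  set P := Measure.pi (fun i => gaussianReal (-w i) (τ ^ 2).toNNReal) with hP
  have hd := gaussVec_density d σ τ hσ hτ w
  have hmE : Measurable fun x => ENNReal.ofReal (rexp (logDens d σ τ w x)) := by fun_prop
  have htr : ∫ v, rexp (f v) ∂(gaussVec d τ)
      = ∫ ε, rexp (f (w + ε) + logDens d σ τ w ε) ∂(gaussVec d σ) := by
    rw [← gaussVec_map_sub d τ w, integral_map (by fun_prop) hf.exp.aestronglyMeasurable, hd,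
      integral_withDensity_eq_integral_toReal_smul hmE
        (Filter.Eventually.of_forall fun x => ENNReal.ofReal_lt_top)]
    refine integral_congr_ae (Filter.Eventually.of_forall fun x => ?_)
    simp only [ENNReal.toReal_ofReal (Real.exp_pos _).le, smul_eq_mul, Real.exp_add]
    ring
  have hint : Integrable (fun ε => rexp (f (w + ε) + logDens d σ τ w ε)) (gaussVec d σ) := by
    have h1 : Integrable (fun ε => rexp (f (w + ε))) P :=
      Integrable.of_bound (by exact hfw.exp.aestronglyMeasurable) (rexp B)
        (Filter.Eventually.of_forall fun ε => by
          rw [Real.norm_eq_abs, Real.abs_exp]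
          exact Real.exp_le_exp.2 ((le_abs_self _).trans (hB _)))
    rw [hP, hd, integrable_withDensity_iff hmE
      (Filter.Eventually.of_forall fun x => ENNReal.ofReal_lt_top)] at h1
    refine h1.congr (Filter.Eventually.of_forall fun x => ?_)
    simp only [ENNReal.toReal_ofReal (Real.exp_pos _).le, Real.exp_add]
  have jensen := convexOn_exp.map_integral_le Real.continuous_exp.continuousOn isClosed_univ
    (Filter.Eventually.of_forall fun _ => Set.mem_univ _) (hif.add hi) hint
  have hpos : 0 < ∫ v, rexp (f v) ∂(gaussVec d τ) := by
    rw [htr]; exact (Real.exp_pos _).trans_le jensen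
  have h3 := (Real.le_log_iff_exp_le hpos).2 (htr ▸ jensen)
  simp only [Pi.add_apply] at h3
  rw [integral_add hif hi, he] at h3
  have h4 : Real.log (τ / σ) = - Real.log (σ / τ) := by
    rw [← Real.log_inv, inv_div]
  rw [h4]
  have h5 : (d : ℝ) * (- Real.log (σ / τ)) = - (d * Real.log (σ / τ)) := by ring
  linarith

/-- Gaussian tail bound by change of variance: outside the ball of radius `σ (1 + c) √d` the density
of `N(0, σ² (1 + c)² I)` with respect to `N(0, σ² I)` is at least `exp (d c² / 2)`. -/
lemma gauss_tail (d : ℕ) (σ c : ℝ) (hσ : 0 < σ) (hc : 0 ≤ c) :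
    ((gaussVec d σ) {x | (σ * (1 + c)) ^ 2 * d < ∑ i, x i ^ 2}).toReal
      ≤ rexp (- (d * c ^ 2 / 2)) := by
  set A := {x : Fin d → ℝ | (σ * (1 + c)) ^ 2 * d < ∑ i, x i ^ 2}
  have hA : MeasurableSet A := measurableSet_lt measurable_const (by fun_prop)
  set τ := σ * (1 + c) with hτd
  have hτ : 0 < τ := by positivity
  have hlog : ∀ x ∈ A, d * c ^ 2 / 2 ≤ logDens d σ τ 0 x := by
    intro x hx
    have hx' : τ ^ 2 * d < ∑ i, x i ^ 2 := hx
    have e1 : logDens d σ τ 0 x = - (d * Real.log (1 + c)) +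
        (∑ i, x i ^ 2) * (1 / (2 * σ ^ 2) - 1 / (2 * τ ^ 2)) := by
      unfold logDens
      rw [show σ / τ = (1 + c)⁻¹ by rw [hτd]; field_simp, Real.log_inv, Finset.sum_mul]
      simp only [Pi.zero_apply, add_zero]
      congr 1
      · ring
      · exact Finset.sum_congr rfl fun i _ => by ring
    have e2 : 0 ≤ 1 / (2 * σ ^ 2) - 1 / (2 * τ ^ 2) := by
      have : σ ≤ τ := by rw [hτd]; nlinarith
      rw [sub_nonneg]
      gcongr
    have e3 : τ ^ 2 * d * (1 / (2 * σ ^ 2) - 1 / (2 * τ ^ 2)) = d * (c + c ^ 2 / 2) := by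
      rw [hτd]; field_simp; ring
    have e4 : Real.log (1 + c) ≤ c := by
      have := Real.log_le_sub_one_of_pos (show 0 < 1 + c by linarith); linarith
    have e5 := mul_le_mul_of_nonneg_right hx'.le e2
    have e6 := mul_le_mul_of_nonneg_left e4 (Nat.cast_nonneg (α := ℝ) d)
    rw [e1]; nlinarith
  have hd := gaussVec_density d σ τ hσ hτ 0
  have h1 : ENNReal.ofReal (rexp (d * c ^ 2 / 2)) * gaussVec d σ A ≤ 1 := by
    calc _ = ∫⁻ x in A, ENNReal.ofReal (rexp (d * c ^ 2 / 2)) ∂(gaussVec d σ) := by simp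
      _ ≤ ∫⁻ x in A, ENNReal.ofReal (rexp (logDens d σ τ 0 x)) ∂(gaussVec d σ) := by
          refine setLIntegral_mono' hA fun x hx => ?_
          exact ENNReal.ofReal_le_ofReal (Real.exp_le_exp.2 (hlog x hx))
      _ = Measure.pi (fun i : Fin d => gaussianReal (-(0 : Fin d → ℝ) i)
            (τ ^ 2).toNNReal) A := by
          rw [hd, withDensity_apply _ hA]
      _ ≤ 1 := prob_le_one
  have h2 := ENNReal.toReal_mono ENNReal.one_ne_top h1
  rw [ENNReal.toReal_mul, ENNReal.toReal_ofReal (Real.exp_pos _).le, ENNReal.toReal_one] at h2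
  rw [Real.exp_neg, ← one_div, le_div_iff₀ (Real.exp_pos _), mul_comm]
  exact h2

/-! ### The train-test gap and Markov's inequality -/

/-- The test indices of `z` are the first `u` indices of `z` read backwards. -/
lemma sum_rev_test (m u : ℕ) (x : Fin (m + u) → ℝ) (z : Equiv.Perm (Fin (m + u))) :
    (∑ i : Fin (m + u), if m ≤ (i : ℕ) then x (z i) else 0)
      = ∑ i : Fin (m + u), if (i : ℕ) < u then x ((Fin.revPerm.trans z) i) else 0 := by
  rw [← Equiv.sum_comp Fin.revPerm]
  refine Finset.sum_congr rfl fun i _ => ?_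
  have : m ≤ ((Fin.revPerm i : Fin (m + u)) : ℕ) ↔ (i : ℕ) < u := by
    simp only [Fin.revPerm_apply, Fin.val_rev]; omega
  simp only [this, Equiv.trans_apply]

lemma sum_train_add_test (m u : ℕ) (x : Fin (m + u) → ℝ) (z : Equiv.Perm (Fin (m + u))) :
    (∑ i : Fin (m + u), if (i : ℕ) < m then x (z i) else 0)
      + (∑ i : Fin (m + u), if m ≤ (i : ℕ) then x (z i) else 0) = ∑ i, x i := by
  rw [← Finset.sum_add_distrib, ← Equiv.sum_comp z x]
  refine Finset.sum_congr rfl fun i _ => ?_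
  by_cases h : (i : ℕ) < m
  · simp [h]
  · simp [h, not_lt.1 h]

/-- Exponential moment of the train-test gap under a uniform permutation. The maximum in `Cmu` comes
from applying `perm_mgf` to the training block when `m ≤ u` and to the test block when `u ≤ m`. -/
lemma gap_mgf (m u : ℕ) (hm : 1 ≤ m) (hu : 1 ≤ u) (x : Fin (m + u) → ℝ)
    (hx : ∀ i, 0 ≤ x i ∧ x i ≤ 1) (lam : ℝ) :
    ∑ z : Equiv.Perm (Fin (m + u)),
        rexp (lam * ((∑ i : Fin (m + u), if m ≤ (i : ℕ) then x (z i) else 0) / u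
          - (∑ i : Fin (m + u), if (i : ℕ) < m then x (z i) else 0) / m))
      ≤ (m + u).factorial * rexp (lam ^ 2 * Cmu m u * ((m : ℝ) + u) / (8 * m * u)) := by
  have hm1 : (1 : ℝ) ≤ m := by exact_mod_cast hm
  have hu1 : (1 : ℝ) ≤ u := by exact_mod_cast hu
  have hd1 : (m : ℝ) + u - 1 / 2 ≠ 0 := by linarith
  rcases le_total (m : ℝ) u with h | h
  · have key := perm_mgf u hu (-(lam * (m + u) / (m * u))) m (m + u) rfl x hx
    have hd2 : (2 : ℝ) * u - 1 ≠ 0 := by linarith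
    convert key using 1
    · refine Finset.sum_congr rfl fun z _ => ?_
      congr 1
      have := sum_train_add_test m u x z
      rw [← this]
      push_cast
      field_simp
      ring
    · congr 2
      rw [Cmu, max_eq_right h]
      have : (u : ℝ) - 1 / 2 = (2 * u - 1) / 2 := by ring
      push_cast
      rw [this]
      field_simp
  · have key := perm_mgf m hm (lam * (m + u) / (m * u)) u (m + u) (by omega) x hx
    have hd2 : (2 : ℝ) * m - 1 ≠ 0 := by linarith
    rw [← Equiv.sum_comp (Equiv.equivCongr (Fin.revPerm (n := m + u)) (Equiv.refl _))] at key
    convert key using 1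
    · refine Finset.sum_congr rfl fun z _ => ?_
      congr 1
      have := sum_train_add_test m u x z
      have h2 := sum_rev_test m u x z
      have h3 : Equiv.equivCongr (Fin.revPerm (n := m + u)) (Equiv.refl _) z
          = Fin.revPerm.trans z := by ext i; simp [Equiv.equivCongr]
      rw [h3, ← h2, ← this]
      push_cast
      field_simp
      ring
    · congr 2
      rw [Cmu, max_eq_left h]
      have : (m : ℝ) - 1 / 2 = (2 * m - 1) / 2 := by ring
      push_cast
      rw [this]
      field_simp

/-- Markov's inequality: if `F ≥ 0` has mean at most `1` under the uniform permutation, then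
`F ≤ 1 / δ` with probability at least `1 - δ`. -/
lemma uniformPerm_ge (n : ℕ) (δ : ℝ) (hδ : 0 < δ) (G : Set (Equiv.Perm (Fin n)))
    (F : Equiv.Perm (Fin n) → ℝ) (hF0 : ∀ z, 0 ≤ F z) (hF : ∑ z, F z ≤ n.factorial)
    (hG : ∀ z, F z ≤ 1 / δ → z ∈ G) : 1 - δ ≤ (uniformPerm n G).toReal := by
  classical
  have hN : (0 : ℝ) < n.factorial := by exact_mod_cast n.factorial_pos
  have h1 : (uniformPerm n G).toReal = (∑ z, if z ∈ G then (1 : ℝ) else 0) / n.factorial := by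
    have : Nonempty (Equiv.Perm (Fin n)) := ⟨1⟩
    rw [uniformPerm, PMF.toMeasure_uniformOfFintype_apply G MeasurableSpace.measurableSet_top]
    simp [Fintype.card_perm, Fintype.card_subtype]
  rw [h1, le_div_iff₀ hN]
  calc (1 - δ) * n.factorial ≤ n.factorial - δ * ∑ z, F z := by nlinarith
    _ = ∑ z, (1 - δ * F z) := by
        rw [Finset.sum_sub_distrib, ← Finset.mul_sum]; simp [Fintype.card_perm]
    _ ≤ _ := by
        refine Finset.sum_le_sum fun z _ => ?_
        split_ifs with h
        · have := mul_nonneg hδ.le (hF0 z); linarith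
        · have : 1 / δ < F z := not_le.1 fun h' => h (hG z h')
          rw [div_lt_iff₀ hδ] at this
          nlinarith

/-! ### The grid of priors -/

/-- Standard deviations of the grid of priors: `τ_j² = σ² exp (j / d)`. For `d = 0` the grid is
constant, which is harmless since `ℝ^0` is a point. -/
def tauGrid (d : ℕ) (σ : ℝ) (j : ℕ) : ℝ := σ * rexp (j / (2 * d))

/-- Relative entropy for `j` between `L` and `L + 1`, where `L = d log (1 + q / (d σ²))`: then
`d σ² + q ≤ d τ_j²`, so the last two terms of the relative entropy add up to at most `0`, and the
remaining one is `d log (τ_j / σ) = j / 2`. -/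
lemma kl_grid (d : ℕ) (σ : ℝ) (hσ : 0 < σ) (q : ℝ) (hq : 0 ≤ q) (hq0 : d = 0 → q = 0) (j : ℕ)
    (hj : d * Real.log (1 + q / (d * σ ^ 2)) ≤ j)
    (hj' : j ≤ d * Real.log (1 + q / (d * σ ^ 2)) + 1) :
    d * Real.log (tauGrid d σ j / σ) - d / 2 + (d * σ ^ 2 + q) / (2 * tauGrid d σ j ^ 2)
      ≤ 1 / 2 * (1 + d * Real.log (1 + q / (d * σ ^ 2))) := by
  have hτ : 0 < tauGrid d σ j := by unfold tauGrid; positivity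
  rcases Nat.eq_zero_or_pos d with rfl | hd
  · simp [hq0 rfl]
  have hd' : (0 : ℝ) < d := by exact_mod_cast hd
  have e1 : Real.log (tauGrid d σ j / σ) = j / (2 * d) := by
    rw [tauGrid, mul_div_cancel_left₀ _ hσ.ne', Real.log_exp]
  have e2 : d * σ ^ 2 + q ≤ d * tauGrid d σ j ^ 2 := by
    have h1 : 1 + q / (d * σ ^ 2) ≤ rexp (j / d) := by
      rw [← Real.log_le_iff_le_exp (by positivity), le_div_iff₀ hd']
      linarith
    have h2 : tauGrid d σ j ^ 2 = σ ^ 2 * rexp (j / d) := by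
      rw [tauGrid, mul_pow, ← Real.exp_nat_mul]; congr 2; push_cast; field_simp
    rw [h2]
    calc d * σ ^ 2 + q = d * σ ^ 2 * (1 + q / (d * σ ^ 2)) := by field_simp
      _ ≤ d * σ ^ 2 * rexp (j / d) := by gcongr
      _ = _ := by ring
  have e3 : (d * σ ^ 2 + q) / (2 * tauGrid d σ j ^ 2) ≤ d / 2 := by
    rw [div_le_div_iff₀ (by positivity) (by norm_num)]; linarith
  have e4 : d * ((j : ℝ) / (2 * d)) = j / 2 := by field_simp
  rw [e1, e4]
  linarith

/-- The weights of the priors have total mass at most `1`, by `ζ(2) = π² / 6`. -/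
lemma sum_weights (J : ℕ) : ∑ j ∈ Finset.range J, 6 / (π ^ 2 * ((j : ℝ) + 1) ^ 2) ≤ 1 := by
  have h := hasSum_zeta_two
  have h1 : ∑ i ∈ (Finset.range J).map ⟨Nat.succ, Nat.succ_injective⟩, 1 / (i : ℝ) ^ 2
      ≤ π ^ 2 / 6 := sum_le_hasSum _ (fun i _ => by positivity) h
  rw [Finset.sum_map] at h1
  simp only [Function.Embedding.coeFn_mk, Nat.cast_succ] at h1
  calc _ = 6 / π ^ 2 * ∑ j ∈ Finset.range J, 1 / ((j : ℝ) + 1) ^ 2 := by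
        rw [Finset.mul_sum]
        refine Finset.sum_congr rfl fun j _ => ?_
        field_simp
    _ ≤ 6 / π ^ 2 * (π ^ 2 / 6) := by gcongr
    _ = 1 := by field_simp

lemma one_le_Cmu (m u : ℕ) (hm : 1 ≤ m) (hu : 1 ≤ u) : 1 ≤ Cmu m u := by
  have hm1 : (1 : ℝ) ≤ m := by exact_mod_cast hm
  have hu1 : (1 : ℝ) ≤ u := by exact_mod_cast hu
  have hM : (1 : ℝ) ≤ max (m : ℝ) u := le_max_of_le_left hm1
  unfold Cmu
  rw [le_div_iff₀ (by apply mul_pos <;> linarith)]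
  nlinarith

lemma one_lt_k (m u : ℕ) (hmu : (2 ≤ m ∧ 3 ≤ u) ∨ (3 ≤ m ∧ 2 ≤ u)) :
    1 < (m : ℝ) * u / ((m : ℝ) + u) := by
  have h0 : (0 : ℝ) < (m : ℝ) + u := by
    have : 0 < m + u := by omega
    exact_mod_cast this
  rw [lt_div_iff₀ h0]
  rcases hmu with ⟨h1, h2⟩ | ⟨h1, h2⟩
  · have h1' : (2 : ℝ) ≤ m := by exact_mod_cast h1
    have h2' : (3 : ℝ) ≤ u := by exact_mod_cast h2
    nlinarith
  · have h1' : (3 : ℝ) ≤ m := by exact_mod_cast h1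
    have h2' : (2 : ℝ) ≤ u := by exact_mod_cast h2
    nlinarith

/-! ### Risks and their Gaussian smoothing -/

section Risks

variable {S : Type*} {d m u : ℕ} {s : Fin (m + u) → S}
  {ℓ : (Fin d → ℝ) → S → ℝ}

lemma Rtrain_mem (hm : 1 ≤ m) (hℓ : ∀ (w : Fin d → ℝ) (i : Fin (m + u)),
    0 ≤ ℓ w (s i) ∧ ℓ w (s i) ≤ 1) (w : Fin d → ℝ) (z : Fin (m + u) → Fin (m + u)) :
    0 ≤ Rtrain m u s ℓ w z ∧ Rtrain m u s ℓ w z ≤ 1 := by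
  have hm0 : (0 : ℝ) < m := by exact_mod_cast hm
  unfold Rtrain
  constructor
  · refine div_nonneg (Finset.sum_nonneg fun i _ => ?_) hm0.le
    split_ifs
    exacts [(hℓ _ _).1, le_rfl]
  · rw [div_le_one hm0]
    calc _ ≤ ∑ i : Fin (m + u), (if (i : ℕ) < m then (1 : ℝ) else 0) := by
          refine Finset.sum_le_sum fun i _ => ?_
          split_ifs
          exacts [(hℓ _ _).2, le_rfl]
      _ = m := by rw [Fin.sum_univ_add]; simp

lemma Rtest_mem (hu : 1 ≤ u) (hℓ : ∀ (w : Fin d → ℝ) (i : Fin (m + u)),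
    0 ≤ ℓ w (s i) ∧ ℓ w (s i) ≤ 1) (w : Fin d → ℝ) (z : Fin (m + u) → Fin (m + u)) :
    0 ≤ Rtest m u s ℓ w z ∧ Rtest m u s ℓ w z ≤ 1 := by
  have hm0 : (0 : ℝ) < u := by exact_mod_cast hu
  unfold Rtest
  constructor
  · refine div_nonneg (Finset.sum_nonneg fun i _ => ?_) hm0.le
    split_ifs
    exacts [(hℓ _ _).1, le_rfl]
  · rw [div_le_one hm0]
    calc _ ≤ ∑ i : Fin (m + u), (if m ≤ (i : ℕ) then (1 : ℝ) else 0) := by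
          refine Finset.sum_le_sum fun i _ => ?_
          split_ifs
          exacts [(hℓ _ _).2, le_rfl]
      _ = u := by rw [Fin.sum_univ_add]; simp

lemma measurable_Rtrain [MeasurableSpace S]
    (hℓmeas : Measurable fun p : (Fin d → ℝ) × S => ℓ p.1 p.2)
    (z : Fin (m + u) → Fin (m + u)) : Measurable fun w => Rtrain m u s ℓ w z := by
  unfold Rtrain
  refine (Finset.measurable_fun_sum _ fun i _ => ?_).div_const _
  split_ifs
  · exact hℓmeas.comp (measurable_id.prodMk measurable_const)
  · exact measurable_const

lemma measurable_Rtest [MeasurableSpace S]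
    (hℓmeas : Measurable fun p : (Fin d → ℝ) × S => ℓ p.1 p.2)
    (z : Fin (m + u) → Fin (m + u)) : Measurable fun w => Rtest m u s ℓ w z := by
  unfold Rtest
  refine (Finset.measurable_fun_sum _ fun i _ => ?_).div_const _
  split_ifs
  · exact hℓmeas.comp (measurable_id.prodMk measurable_const)
  · exact measurable_const

/-- A vector of law `N(0, σ² I)` leaves the ball of radius `rho` with probability at most
`(m + u) / (m u)`. -/
lemma gauss_tail_rho (d m u : ℕ) (σ : ℝ) (hσ : 0 < σ)
    (hk : 1 < (m : ℝ) * u / ((m : ℝ) + u)) :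
    ((gaussVec d σ) {x | (σ * (1 + Ctil d m u)) ^ 2 * d < ∑ i, x i ^ 2}).toReal
      ≤ ((m : ℝ) + u) / (m * u) := by
  rcases Nat.eq_zero_or_pos d with rfl | hd
  · simp only [Nat.cast_zero, mul_zero, Finset.univ_eq_empty, Finset.sum_empty, lt_self_iff_false,
      Set.ofPred_false, measure_empty, ENNReal.toReal_zero]
    positivity
  refine (gauss_tail d σ (Ctil d m u) hσ (Real.sqrt_nonneg _)).trans (le_of_eq ?_)
  have hd' : (0 : ℝ) < d := by exact_mod_cast hd
  have hl := Real.log_pos hk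
  rw [Ctil, Real.sq_sqrt (by positivity)]
  rw [show (d : ℝ) * (2 * Real.log ((m : ℝ) * u / ((m : ℝ) + u)) / d) / 2
    = Real.log ((m : ℝ) * u / ((m : ℝ) + u)) by field_simp, Real.exp_neg,
    Real.exp_log (by linarith), inv_div]

/-- The smoothed training risk is at most the worst training risk in the ball of radius `rho`, up to
the probability of leaving that ball. -/
lemma integral_Rtrain_le [MeasurableSpace S]
    (hℓmeas : Measurable fun p : (Fin d → ℝ) × S => ℓ p.1 p.2)
    (hm : 1 ≤ m) (hℓ : ∀ (w : Fin d → ℝ) (i : Fin (m + u)), 0 ≤ ℓ w (s i) ∧ ℓ w (s i) ≤ 1)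
    (σ : ℝ) (hσ : 0 < σ) (hk : 1 < (m : ℝ) * u / ((m : ℝ) + u))
    (w : Fin d → ℝ) (z : Fin (m + u) → Fin (m + u)) :
    0 ≤ (⨆ ε : {ε : Fin d → ℝ // l2norm d ε ≤ rho d m u σ}, Rtrain m u s ℓ (w + ε.1) z) ∧
    ∫ ε, Rtrain m u s ℓ (w + ε) z ∂(gaussVec d σ) ≤
      (⨆ ε : {ε : Fin d → ℝ // l2norm d ε ≤ rho d m u σ}, Rtrain m u s ℓ (w + ε.1) z)
        + ((m : ℝ) + u) / (m * u) := by
  set M := ⨆ ε : {ε : Fin d → ℝ // l2norm d ε ≤ rho d m u σ}, Rtrain m u s ℓ (w + ε.1) z with hM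
  have hc : 0 ≤ Ctil d m u := Real.sqrt_nonneg _
  have hbdd : BddAbove (Set.range fun ε : {ε : Fin d → ℝ // l2norm d ε ≤ rho d m u σ} =>
      Rtrain m u s ℓ (w + ε.1) z) := ⟨1, by rintro _ ⟨ε, rfl⟩; exact (Rtrain_mem hm hℓ _ z).2⟩
  have hM0 : 0 ≤ M := by
    have h0 : l2norm d 0 ≤ rho d m u σ := by
      have : l2norm d 0 = 0 := by simp [l2norm]
      rw [this, rho]; positivity
    exact (Rtrain_mem hm hℓ _ z).1.trans (le_ciSup hbdd ⟨0, h0⟩)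
  refine ⟨hM0, ?_⟩
  set A := {x : Fin d → ℝ | (σ * (1 + Ctil d m u)) ^ 2 * d < ∑ i, x i ^ 2}
  have hA : MeasurableSet A := measurableSet_lt measurable_const (by fun_prop)
  have hmeas := measurable_Rtrain (s := s) hℓmeas z
  have hi : Integrable (fun ε => Rtrain m u s ℓ (w + ε) z) (gaussVec d σ) :=
    Integrable.of_bound (hmeas.comp (measurable_const_add w)).aestronglyMeasurable 1
      (Filter.Eventually.of_forall fun ε => by
        rw [Real.norm_eq_abs, abs_of_nonneg (Rtrain_mem hm hℓ _ z).1]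
        exact (Rtrain_mem hm hℓ _ z).2)
  have hi2 : Integrable (A.indicator fun _ => (1 : ℝ)) (gaussVec d σ) :=
    (integrable_const _).indicator hA
  calc _ ≤ ∫ ε, (M + A.indicator (fun _ => (1 : ℝ)) ε) ∂(gaussVec d σ) := by
        refine integral_mono hi ((integrable_const _).add hi2) fun ε => ?_
        simp only
        by_cases hε : ε ∈ A
        · rw [Set.indicator_of_mem hε]
          linarith [(Rtrain_mem hm hℓ (w + ε) z).2]
        · rw [Set.indicator_of_notMem hε, add_zero]
          have h1 : ∑ i, ε i ^ 2 ≤ (σ * (1 + Ctil d m u)) ^ 2 * d := not_lt.1 hε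
          have h2 : l2norm d ε ≤ rho d m u σ := by
            rw [l2norm, rho]
            apply Real.sqrt_le_iff.2 ⟨by positivity, ?_⟩
            rw [mul_pow _ (√(d : ℝ)), Real.sq_sqrt (Nat.cast_nonneg d)]
            exact h1
          exact le_ciSup hbdd ⟨ε, h2⟩
    _ = M + ((gaussVec d σ) A).toReal := by
        rw [integral_add (integrable_const _) hi2, integral_indicator hA]
        simp [measureReal_def]
    _ ≤ _ := by
        gcongr
        exact gauss_tail_rho d m u σ hσ hk

end Risks

set_option maxHeartbeats 800000 in
theorem statement16 {S : Type*} [MeasurableSpace S]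
    (d m u : ℕ) (hmu : (2 ≤ m ∧ 3 ≤ u) ∨ (3 ≤ m ∧ 2 ≤ u))
    (s : Fin (m + u) → S)
    (ℓ : (Fin d → ℝ) → S → ℝ) (hℓmeas : Measurable fun p : (Fin d → ℝ) × S => ℓ p.1 p.2)
    (hℓ : ∀ (w : Fin d → ℝ) (i : Fin (m + u)), 0 ≤ ℓ w (s i) ∧ ℓ w (s i) ≤ 1)
    (W : Equiv.Perm (Fin (m + u)) → (Fin d → ℝ)) (hWmeas : Measurable W)
    (σ : ℝ) (hσ : 0 < σ)
    (hflat : ∀ z : Equiv.Perm (Fin (m + u)),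
      Rtest m u s ℓ (W z) z ≤ ∫ ε, Rtest m u s ℓ (W z + ε) z ∂(gaussVec d σ))
    (lam : ℝ) (hlam : 0 < lam) (δ : ℝ) (hδ0 : 0 < δ) (hδ1 : δ < 1) :
    1 - δ ≤
      (uniformPerm (m + u) {z |
        Rtest m u s ℓ (W z) z
          ≤ (⨆ ε : {ε : Fin d → ℝ // l2norm d ε ≤ rho d m u σ},
              Rtrain m u s ℓ (W z + ε.1) z)
            + (lam * Cmu m u + 8) * ((m : ℝ) + u) / (8 * m * u)
            + (1 / lam) *
              ((1 / 2) * (1 + d * Real.log (1 +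
                    (1 + Ctil d m u) ^ 2 * l2norm d (W z) ^ 2 / rho d m u σ ^ 2))
                + Real.log (1 / (6 * δ))
                + 2 * Real.log (6 * Real.pi * m * u / ((m : ℝ) + u)))}).toReal := by
  have hm : 1 ≤ m := by omega
  have hu : 1 ≤ u := by omega
  have hm0 : (0 : ℝ) < m := by exact_mod_cast hm
  have hu0 : (0 : ℝ) < u := by exact_mod_cast hu
  have hk := one_lt_k m u hmu
  have hC := one_le_Cmu m u hm hu
  -- Every bound is governed by the effective sample size `k = m u / (m + u) > 1`.
  set k : ℝ := (m : ℝ) * u / ((m : ℝ) + u) with hkdef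
  have hkinv : ((m : ℝ) + u) / (m * u) = 1 / k := by rw [hkdef, one_div_div]
  set V : ℝ := lam ^ 2 * Cmu m u * ((m : ℝ) + u) / (8 * m * u) with hV
  have hVk : V = lam ^ 2 * Cmu m u / (8 * k) := by rw [hV, hkdef]; field_simp
  set f : Equiv.Perm (Fin (m + u)) → (Fin d → ℝ) → ℝ :=
    fun z v => lam * (Rtest m u s ℓ v z - Rtrain m u s ℓ v z) with hf
  have hfmeas : ∀ z, Measurable (f z) := fun z =>
    ((measurable_Rtest hℓmeas z).sub (measurable_Rtrain hℓmeas z)).const_mul lam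
  have hfb : ∀ z v, |f z v| ≤ lam := by
    intro z v
    have h1 := Rtest_mem hu hℓ v z
    have h2 := Rtrain_mem hm hℓ v z
    rw [hf, abs_mul, abs_of_pos hlam]
    have : |Rtest m u s ℓ v z - Rtrain m u s ℓ v z| ≤ 1 := abs_le.2 ⟨by linarith, by linarith⟩
    nlinarith
  have hfint : ∀ z τ, Integrable (fun v => rexp (f z v)) (gaussVec d τ) := fun z τ =>
    Integrable.of_bound (hfmeas z).exp.aestronglyMeasurable (rexp lam)
      (Filter.Eventually.of_forall fun v => by
        rw [Real.norm_eq_abs, Real.abs_exp]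
        exact Real.exp_le_exp.2 ((le_abs_self _).trans (hfb z v)))
  set a : ℕ → Equiv.Perm (Fin (m + u)) → ℝ :=
    fun j z => ∫ v, rexp (f z v) ∂(gaussVec d (tauGrid d σ j)) with ha
  have ha0 : ∀ j z, 0 ≤ a j z := fun j z => integral_nonneg fun v => (Real.exp_pos _).le
  have hasum : ∀ j, ∑ z, a j z ≤ (m + u).factorial * rexp V := by
    intro j
    rw [ha, ← integral_finsetSum _ fun z _ => hfint z _]
    calc _ ≤ ∫ _, ((m + u).factorial * rexp V : ℝ) ∂(gaussVec d (tauGrid d σ j)) :=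
          integral_mono (integrable_finsetSum _ fun z _ => hfint z _) (integrable_const _)
            fun v => gap_mgf m u hm hu (fun i => ℓ v (s i)) (hℓ v) lam
      _ = _ := by simp
  -- Apply Markov's inequality once, to the mixture over the grid of priors with weights
  -- `6 / (π² (j + 1)²)`; only the indices `j < 6k` are ever used.
  set J := ⌊6 * k⌋₊ with hJ
  refine uniformPerm_ge (m + u) δ hδ0 _
    (fun z => ∑ j ∈ Finset.range J, 6 / (π ^ 2 * ((j : ℝ) + 1) ^ 2) * (rexp (-V) * a j z))
    (fun z => Finset.sum_nonneg fun j _ => by have := ha0 j z; positivity) ?_ ?_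
  · rw [Finset.sum_comm]
    calc _ ≤ ∑ j ∈ Finset.range J, 6 / (π ^ 2 * ((j : ℝ) + 1) ^ 2) * (m + u).factorial := by
          refine Finset.sum_le_sum fun j _ => ?_
          rw [← Finset.mul_sum, ← Finset.mul_sum]
          gcongr
          calc rexp (-V) * ∑ z, a j z ≤ rexp (-V) * ((m + u).factorial * rexp V) := by
                gcongr; exact hasum j
            _ = (m + u).factorial * (rexp (-V) * rexp V) := by ring
            _ = _ := by rw [← Real.exp_add]; simp
      _ ≤ 1 * ((m + u).factorial : ℝ) := by
          rw [← Finset.sum_mul]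
          gcongr
          exact sum_weights J
      _ = _ := one_mul _
  intro z hz
  rw [Set.mem_ofPred_eq]
  set q : ℝ := ∑ i, W z i ^ 2 with hq
  have hq0 : 0 ≤ q := Finset.sum_nonneg fun i _ => sq_nonneg _
  have hc : 0 ≤ Ctil d m u := Real.sqrt_nonneg _
  have hratio : (1 + Ctil d m u) ^ 2 * l2norm d (W z) ^ 2 / rho d m u σ ^ 2
      = q / (d * σ ^ 2) := by
    rw [l2norm, Real.sq_sqrt hq0, rho, mul_pow, mul_pow, Real.sq_sqrt (Nat.cast_nonneg d),
      show σ ^ 2 * (1 + Ctil d m u) ^ 2 * (d : ℝ) = (1 + Ctil d m u) ^ 2 * (d * σ ^ 2) by ring,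
      mul_div_mul_left _ _ (by positivity)]
  obtain ⟨hM0, hMle⟩ := integral_Rtrain_le hℓmeas hm hℓ σ hσ hk (W z) z
  rw [hratio]
  rw [hkinv] at hMle
  set M := ⨆ ε : {ε : Fin d → ℝ // l2norm d ε ≤ rho d m u σ}, Rtrain m u s ℓ (W z + ε.1) z
  set L : ℝ := d * Real.log (1 + q / (d * σ ^ 2)) with hL
  have hL0 : 0 ≤ L := mul_nonneg (Nat.cast_nonneg d)
    (Real.log_nonneg (le_add_of_nonneg_right (by positivity)))
  have e1 : (lam * Cmu m u + 8) * ((m : ℝ) + u) / (8 * m * u)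
      = lam * Cmu m u / (8 * k) + 1 / k := by
    rw [hkdef]; field_simp
  have e2 : 6 * π * m * u / ((m : ℝ) + u) = 6 * k * π := by rw [hkdef]; ring
  rw [e1, e2]
  set T : ℝ := 1 / 2 * (1 + L) + Real.log (1 / (6 * δ)) + 2 * Real.log (6 * k * π) with hT
  have hT' : T = 1 / 2 * (1 + L) + Real.log ((6 * k * π) ^ 2 / (6 * δ)) := by
    have hl : Real.log ((6 * k * π) ^ 2 / (6 * δ))
        = Real.log (1 / (6 * δ)) + 2 * Real.log (6 * k * π) := by
      rw [div_eq_mul_one_div ((6 * k * π) ^ 2),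
        Real.log_mul (x := (6 * k * π) ^ 2) (by positivity) (by positivity), Real.log_pow]
      push_cast; ring
    rw [hT, hl]; ring
  -- For `L ≤ 4k` the prior `j = ⌈L⌉` belongs to the grid because `j + 1 < L + 2 ≤ 6k`;
  -- for `L > 4k` the right-hand side already exceeds `1`.
  by_cases hLk : L ≤ 4 * k
  · set j := ⌈L⌉₊ with hj
    have hj1 : L ≤ j := Nat.le_ceil L
    have hj2 : (j : ℝ) < L + 1 := Nat.ceil_lt_add_one hL0
    have hjJ : (j : ℝ) + 1 ≤ 6 * k := by linarith
    have hjmem : j ∈ Finset.range J := by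
      rw [Finset.mem_range]
      have : j + 1 ≤ J := Nat.le_floor (by push_cast; exact hjJ)
      omega
    have hz' : 6 / (π ^ 2 * ((j : ℝ) + 1) ^ 2) * (rexp (-V) * a j z) ≤ 1 / δ :=
      (Finset.single_le_sum (f := fun j : ℕ =>
        6 / (π ^ 2 * ((j : ℝ) + 1) ^ 2) * (rexp (-V) * a j z))
        (fun i _ => by have := ha0 i z; positivity) hjmem).trans hz
    have hapos : 0 < a j z := integral_exp_pos (hfint z _)
    have hloga : Real.log (a j z) ≤ V + Real.log ((6 * k * π) ^ 2 / (6 * δ)) := by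
      rw [Real.log_le_iff_le_exp hapos, Real.exp_add, Real.exp_log (by positivity)]
      have h1 : a j z ≤ rexp V * ((((j : ℝ) + 1) * π) ^ 2 / (6 * δ)) := by
        rw [Real.exp_neg] at hz'
        have := Real.exp_pos V
        field_simp at hz' ⊢
        linarith
      refine h1.trans ?_
      gcongr
    have hτ : 0 < tauGrid d σ j := by unfold tauGrid; positivity
    have gib := gibbs_gauss d σ (tauGrid d σ j) hσ hτ (W z) (f z) (hfmeas z) lam (hfb z)
    have kl := kl_grid d σ hσ q hq0 (by rintro rfl; simp [hq]) j hj1 hj2.le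
    have hfi : ∫ ε, f z (W z + ε) ∂(gaussVec d σ)
        = lam * (∫ ε, Rtest m u s ℓ (W z + ε) z ∂(gaussVec d σ)
          - ∫ ε, Rtrain m u s ℓ (W z + ε) z ∂(gaussVec d σ)) := by
      rw [hf, integral_const_mul, integral_sub]
      · exact Integrable.of_bound ((measurable_Rtest hℓmeas z).comp
          (measurable_const_add (W z))).aestronglyMeasurable 1
          (Filter.Eventually.of_forall fun ε => by
            rw [Real.norm_eq_abs, abs_of_nonneg (Rtest_mem hu hℓ _ z).1]
            exact (Rtest_mem hu hℓ _ z).2)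
      · exact Integrable.of_bound ((measurable_Rtrain hℓmeas z).comp
          (measurable_const_add (W z))).aestronglyMeasurable 1
          (Filter.Eventually.of_forall fun ε => by
            rw [Real.norm_eq_abs, abs_of_nonneg (Rtrain_mem hm hℓ _ z).1]
            exact (Rtrain_mem hm hℓ _ z).2)
    rw [hfi] at gib
    have hfl := hflat z
    have h2 : lam * (Rtest m u s ℓ (W z) z - (M + 1 / k)) ≤ T + V := by
      have : lam * (Rtest m u s ℓ (W z) z - (M + 1 / k)) ≤
          lam * (∫ ε, Rtest m u s ℓ (W z + ε) z ∂(gaussVec d σ)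
          - ∫ ε, Rtrain m u s ℓ (W z + ε) z ∂(gaussVec d σ)) :=
        mul_le_mul_of_nonneg_left (by linarith) hlam.le
      rw [hT']
      linarith
    have h3 : Rtest m u s ℓ (W z) z - (M + 1 / k) ≤ (T + V) / lam := by
      rw [le_div_iff₀ hlam]; linarith
    have h4 : (T + V) / lam = lam * Cmu m u / (8 * k) + 1 / lam * T := by
      rw [hVk]; field_simp; ring
    linarith
  · have hLk' : 4 * k ≤ L := (not_le.1 hLk).le
    have hlog : 0 ≤ Real.log ((6 * k * π) ^ 2 / (6 * δ)) := by
      apply Real.log_nonneg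
      rw [le_div_iff₀ (by positivity)]
      have h3 : 3 < π := Real.pi_gt_three
      have h18 : 6 ≤ 6 * k * π := by nlinarith
      nlinarith
    have hTk : 2 * k ≤ T := by rw [hT']; linarith
    -- AM-GM, with equality at `lam = 4k`.
    have h1 : 1 ≤ lam / (8 * k) + 1 / lam * (2 * k) := by
      have : lam / (8 * k) + 1 / lam * (2 * k) - 1 = (lam - 4 * k) ^ 2 / (8 * k * lam) := by
        field_simp; ring
      have h' : 0 ≤ (lam - 4 * k) ^ 2 / (8 * k * lam) := by positivity
      linarith
    have h2 : lam / (8 * k) ≤ lam * Cmu m u / (8 * k) := by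
      gcongr; exact le_mul_of_one_le_right hlam.le hC
    have h3 : 1 / lam * (2 * k) ≤ 1 / lam * T := by gcongr
    have h4 := (Rtest_mem hu hℓ (W z) z).2
    have h5 : 0 < 1 / k := by positivity
    linarith

end
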